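/- A topological space X is a uniformizable Alexandroff space if and only if X is an Alexandroff space and the relation {(a,b) ∈ X × X : V(b) ⊆ V(a)} is an equivalence relation on X (i.e., it is reflexive, symmetric and transitive). -/

import Mathlib

open Set

variable {X : Type*}

/-- `V a` : the intersection of all open neighbourhoods of `a`. -/
def V [TopologicalSpace X] (a : X) : Set X :=
  ⋂₀ {U : Set X | IsOpen U ∧ a ∈ U}

/-- A topological space is uniformizable if its topology is induced by some
uniform structure. -/
def Uniformizable (X : Type*) [t : TopologicalSpace X] : Prop :=
  ∃ u : UniformSpace X, u.toTopologicalSpace = t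

theorem mem_V_iff_specializes [TopologicalSpace X] {a b : X} : b ∈ V a ↔ b ⤳ a := by
  simp only [V, mem_sInter, mem_ofPred_eq, and_imp, specializes_iff_forall_open]

theorem V_subset_V_iff_specializes [TopologicalSpace X] {a b : X} : V b ⊆ V a ↔ b ⤳ a :=
  ⟨fun h => mem_V_iff_specializes.1 (h (mem_V_iff_specializes.2 specializes_rfl)),
    fun h _ hc => mem_V_iff_specializes.2 ((mem_V_iff_specializes.1 hc).trans h)⟩

open Filter Topology in
theorem nhds_eq_principal_V [TopologicalSpace X] {a : X} (ha : IsOpen (V a)) :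
    𝓝 a = 𝓟 (V a) := by
  refine le_antisymm
    (le_principal_iff.2 (ha.mem_nhds (mem_V_iff_specializes.2 specializes_rfl))) ?_
  intro s hs
  obtain ⟨U, hUs, hU, haU⟩ := mem_nhds_iff.1 hs
  exact mem_principal.2 fun b hb => hUs (hb U ⟨hU, haU⟩)

open Filter Topology in
/-- If the specialization preorder of an Alexandroff space is symmetric, it generates a uniform
structure inducing the topology. -/
theorem uniformizable_of_specializes_symm [t : TopologicalSpace X]
    (hV : ∀ a : X, IsOpen (V a)) (hsymm : ∀ a b : X, a ⤳ b → b ⤳ a) : Uniformizable X :=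
  ⟨{ toTopologicalSpace := t
     uniformity := 𝓟 {p : X × X | p.2 ⤳ p.1}
     symm := tendsto_principal_principal.2 fun p hp => hsymm p.2 p.1 hp
     comp := by
      refine (lift'_le (mem_principal_self _) le_rfl).trans (principal_mono.2 ?_)
      rintro ⟨a, b⟩ ⟨c, hac, hcb⟩
      exact Specializes.trans hcb hac
     nhds_eq_comap_uniformity := fun a => by
      rw [nhds_eq_principal_V (hV a), comap_principal]
      congr 1
      ext b
      exact mem_V_iff_specializes }, rfl⟩

/-- `X` is a uniformizable Alexandroff space iff `X` is an Alexandroff space and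
the relation `{(a, b) : V b ⊆ V a}` is an equivalence relation on `X`. -/
theorem stmt7 [TopologicalSpace X] :
    ((∀ a : X, IsOpen (V a)) ∧ Uniformizable X) ↔
      ((∀ a : X, IsOpen (V a)) ∧
        Equivalence (fun a b : X => V b ⊆ V a)) := by
  refine and_congr_right fun hV => ⟨?_, fun h => ?_⟩
  · rintro ⟨u, rfl⟩
    refine ⟨fun _ => Subset.rfl, fun h => ?_, fun h h' => h'.trans h⟩
    exact V_subset_V_iff_specializes.2 (V_subset_V_iff_specializes.1 h).symm
  · exact uniformizable_of_specializes_symm hV fun a b hab =>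
      V_subset_V_iff_specializes.1 (h.symm (V_subset_V_iff_specializes.2 hab))
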